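/- arXiv:2506.16753 — 10 statements merged into one kernel-verified Lean document; each statement's English description precedes it below -/
import Mathlib

section
/- Let S be a finite nonempty type, let p : S → ℝ be a probability vector with p s > 0 for all s, let q : S → ℝ, and let α > 0. Then for every probability vector ν on S, ∑_s ν s * q s − α * ∑_s ν s * (Real.log (ν s) − Real.log (p s)) ≤ α * Real.log (∑_s p s * Real.exp (q s / α)). -/
/-- Upper-bound half of the KL-soft-constrained adversary lemma:
for any probability vector `ν`, the KL-regularized expected value is bounded
by the weighted log-sum-exp. -/
theorem klSoftAdversary_upper_bound
    {S : Type*} [Fintype S] [Nonempty S]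
    (p : S → ℝ) (hp_nonneg : ∀ s, 0 ≤ p s) (hp_sum : ∑ s, p s = 1)
    (hp_pos : ∀ s, 0 < p s)
    (q : S → ℝ) (α : ℝ) (hα : 0 < α)
    (ν : S → ℝ) (hν_nonneg : ∀ s, 0 ≤ ν s) (hν_sum : ∑ s, ν s = 1) :
    (∑ s, ν s * q s) - α * ∑ s, ν s * (Real.log (ν s) - Real.log (p s)) ≤
      α * Real.log (∑ s, p s * Real.exp (q s / α)) := by
  set Z := ∑ s, p s * Real.exp (q s / α) with hZ
  have hZpos : 0 < Z :=
    Finset.sum_pos (fun s _ => mul_pos (hp_pos s) (Real.exp_pos _)) Finset.univ_nonempty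
  have key : ∀ s, ν s * (q s / α) - ν s * (Real.log (ν s) - Real.log (p s))
      - ν s * Real.log Z ≤ p s * Real.exp (q s / α) / Z - ν s := by
    intro s
    have hpe : 0 < p s * Real.exp (q s / α) := mul_pos (hp_pos s) (Real.exp_pos _)
    rcases (hν_nonneg s).eq_or_lt with h | h
    · rw [← h]
      simp only [zero_mul, sub_zero]
      positivity
    · have h1 := Real.log_le_sub_one_of_pos (div_pos hpe (mul_pos hZpos h))
      rw [Real.log_div hpe.ne' (mul_pos hZpos h).ne', Real.log_mul hZpos.ne' h.ne',
        Real.log_mul (hp_pos s).ne' (Real.exp_pos _).ne', Real.log_exp] at h1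
      have h2 := mul_le_mul_of_nonneg_left h1 h.le
      have h3 : ν s * (p s * Real.exp (q s / α) / (Z * ν s) - 1)
          = p s * Real.exp (q s / α) / Z - ν s := by
        field_simp
      rw [h3] at h2
      linarith
  have hs := Finset.sum_le_sum (fun s (_ : s ∈ Finset.univ) => key s)
  simp only [Finset.sum_sub_distrib] at hs
  rw [← Finset.sum_mul, ← Finset.sum_div, ← hZ, hν_sum, div_self hZpos.ne'] at hs
  have e : ∑ s, ν s * q s = α * ∑ s, ν s * (q s / α) := by
    rw [Finset.mul_sum]
    refine Finset.sum_congr rfl fun s _ => ?_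
    field_simp
  simp only [mul_sub, Finset.sum_sub_distrib] at hs ⊢
  rw [e]
  nlinarith [mul_le_mul_of_nonneg_left hs hα.le]
end

section
/- Let S be a finite nonempty type, let p : S → ℝ be a probability vector with p s > 0 for all s, let q : S → ℝ, and let α > 0. Set Z = ∑_s p s * Real.exp (q s / α) and define ν* : S → ℝ by ν* s = p s * Real.exp (q s / α) / Z. Then ν* is a probability vector with ν* s > 0 for all s, and it attains the optimum: ∑_s ν* s * q s − α * ∑_s ν* s * (Real.log (ν* s) − Real.log (p s)) = α * Real.log Z. -/
/-- Attainment half of the KL-soft-constrained adversary lemma: the Gibbs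
distribution `ν* s = p s * exp (q s / α) / Z` is a positive probability vector
attaining the optimum `α * log Z`. -/
theorem klSoftAdversary_gibbs_attains
    {S : Type*} [Fintype S] [Nonempty S]
    (p : S → ℝ) (hp_nonneg : ∀ s, 0 ≤ p s) (hp_sum : ∑ s, p s = 1)
    (hp_pos : ∀ s, 0 < p s)
    (q : S → ℝ) (α : ℝ) (hα : 0 < α)
    (Z : ℝ) (hZ : Z = ∑ s, p s * Real.exp (q s / α))
    (νstar : S → ℝ) (hνstar : ∀ s, νstar s = p s * Real.exp (q s / α) / Z) :
    (∀ s, 0 ≤ νstar s) ∧ (∑ s, νstar s = 1) ∧ (∀ s, 0 < νstar s) ∧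
      (∑ s, νstar s * q s) -
          α * ∑ s, νstar s * (Real.log (νstar s) - Real.log (p s)) =
        α * Real.log Z := by
  have hZpos : 0 < Z := by
    rw [hZ]
    exact Finset.sum_pos (fun s _ => mul_pos (hp_pos s) (Real.exp_pos _)) Finset.univ_nonempty
  have hpos : ∀ s, 0 < νstar s := fun s => by
    rw [hνstar s]
    exact div_pos (mul_pos (hp_pos s) (Real.exp_pos _)) hZpos
  have hsum : ∑ s, νstar s = 1 := by
    simp_rw [hνstar]
    rw [← Finset.sum_div, ← hZ, div_self hZpos.ne']
  refine ⟨fun s => (hpos s).le, hsum, hpos, ?_⟩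
  have hlog : ∀ s, Real.log (νstar s) - Real.log (p s) = q s / α - Real.log Z := fun s => by
    rw [hνstar s, Real.log_div (mul_pos (hp_pos s) (Real.exp_pos _)).ne' hZpos.ne',
      Real.log_mul (hp_pos s).ne' (Real.exp_pos _).ne', Real.log_exp]
    ring
  rw [Finset.mul_sum, ← Finset.sum_sub_distrib]
  have hterm : ∀ s, νstar s * q s - α * (νstar s * (Real.log (νstar s) - Real.log (p s)))
      = νstar s * (α * Real.log Z) := fun s => by
    rw [hlog s]
    field_simp
    ring
  rw [Finset.sum_congr rfl (fun s _ => hterm s), ← Finset.sum_mul, hsum, one_mul]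
end

section
/- Let S be a finite nonempty type, let p : S → ℝ be a probability vector with p s > 0 for all s, and let α > 0. Then for all q₁, q₂ : S → ℝ, |α * Real.log (∑_s p s * Real.exp (q₁ s / α)) − α * Real.log (∑_s p s * Real.exp (q₂ s / α))| ≤ max_s |q₁ s − q₂ s|. -/
theorem logSumExp_aux
    {S : Type*} [Fintype S] [Nonempty S]
    (p : S → ℝ) (hp_pos : ∀ s, 0 < p s)
    (α : ℝ) (hα : 0 < α) (q₁ q₂ : S → ℝ) (M : ℝ) (h : ∀ s, q₁ s ≤ q₂ s + M) :
    α * Real.log (∑ s, p s * Real.exp (q₁ s / α)) ≤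
        α * Real.log (∑ s, p s * Real.exp (q₂ s / α)) + M := by
  have pos : ∀ q : S → ℝ, 0 < ∑ s, p s * Real.exp (q s / α) := fun q =>
    Finset.sum_pos (fun s _ => mul_pos (hp_pos s) (Real.exp_pos _)) Finset.univ_nonempty
  have h1 : ∑ s, p s * Real.exp (q₁ s / α) ≤
      (∑ s, p s * Real.exp (q₂ s / α)) * Real.exp (M / α) := by
    rw [Finset.sum_mul]
    refine Finset.sum_le_sum fun s _ => ?_
    rw [mul_assoc, ← Real.exp_add, ← add_div]
    have := h s
    have := (hp_pos s).le
    gcongr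
  have h2 := Real.log_le_log (pos q₁) h1
  rw [Real.log_mul (pos q₂).ne' (Real.exp_pos _).ne', Real.log_exp] at h2
  have h3 := mul_le_mul_of_nonneg_left h2 hα.le
  rwa [mul_add, mul_div_cancel₀ _ hα.ne'] at h3

/-- 1-Lipschitz (in sup norm) property of the weighted log-sum-exp functional. -/
theorem logSumExp_lipschitz
    {S : Type*} [Fintype S] [Nonempty S]
    (p : S → ℝ) (hp_nonneg : ∀ s, 0 ≤ p s) (hp_sum : ∑ s, p s = 1)
    (hp_pos : ∀ s, 0 < p s)
    (α : ℝ) (hα : 0 < α) (q₁ q₂ : S → ℝ) :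
    |α * Real.log (∑ s, p s * Real.exp (q₁ s / α)) -
        α * Real.log (∑ s, p s * Real.exp (q₂ s / α))| ≤
      Finset.univ.sup' Finset.univ_nonempty (fun s => |q₁ s - q₂ s|) := by
  have hM : ∀ s, |q₁ s - q₂ s| ≤
      Finset.univ.sup' Finset.univ_nonempty (fun s => |q₁ s - q₂ s|) := fun s =>
    Finset.le_sup' (fun s => |q₁ s - q₂ s|) (Finset.mem_univ s)
  generalize Finset.univ.sup' Finset.univ_nonempty (fun s => |q₁ s - q₂ s|) = M at hM ⊢
  have a := logSumExp_aux p hp_pos α hα q₁ q₂ M fun s => by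
    have := (abs_le.mp (hM s)).2
    linarith
  have b := logSumExp_aux p hp_pos α hα q₂ q₁ M fun s => by
    have := (abs_le.mp (hM s)).1
    linarith
  rw [abs_le]
  constructor <;> linarith
end

section
/- Fix finite nonempty types S (states; the observation space is also S) and A (actions), a transition kernel F : S → A → S → ℝ with F s a s' ≥ 0 and ∑_{s'} F s a s' = 1 for all s, a; a perturbation prior p : S → S → ℝ with p s s̃ > 0 and ∑_{s̃} p s s̃ = 1 for all s; a policy π : S → A → ℝ with π s̃ a ≥ 0 and ∑_a π s̃ a = 1 for all s̃; a reward r : S → A → ℝ; a discount factor γ with 0 ≤ γ < 1; and coefficients α_attk > 0, α_ent ∈ ℝ. Define H(s̃) = −∑_a π s̃ a * Real.log (π s̃ a), and for Q : S → A → ℝ define V_Q(s, s̃) = ∑_a π s̃ a * Q s a + α_ent * H(s̃). Define the soft-worst (KL) Bellman operator by (T Q)(s, a) = r s a + γ * ∑_{s'} F s a s' * ( −α_attk * Real.log ( ∑_{s̃} p s' s̃ * Real.exp ( −V_Q(s', s̃) / α_attk ) ) ). Then T is a γ-contraction in sup norm: for all Q₁, Q₂ : S → A → ℝ, max_{(s,a)}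 |(T Q₁)(s,a) − (T Q₂)(s,a)| ≤ γ * max_{(s,a)} |Q₁(s,a) − Q₂(s,a)|. -/
/-- Contraction property of the soft-worst (KL) Bellman operator
(the paper's Theorem 4.5). -/
theorem klSoftWorst_bellman_contraction
    {S A : Type*} [Fintype S] [Nonempty S] [Fintype A] [Nonempty A]
    (F : S → A → S → ℝ) (hF0 : ∀ s a s', 0 ≤ F s a s')
    (hF1 : ∀ s a, ∑ s', F s a s' = 1)
    (p : S → S → ℝ) (hp0 : ∀ s t, 0 < p s t) (hp1 : ∀ s, ∑ t, p s t = 1)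
    (π : S → A → ℝ) (hπ0 : ∀ t a, 0 ≤ π t a) (hπ1 : ∀ t, ∑ a, π t a = 1)
    (r : S → A → ℝ) (γ : ℝ) (hγ0 : 0 ≤ γ) (hγ1 : γ < 1)
    (αattk αent : ℝ) (hαattk : 0 < αattk)
    (H : S → ℝ) (hH : ∀ t, H t = -∑ a, π t a * Real.log (π t a))
    (V : (S → A → ℝ) → S → S → ℝ)
    (hV : ∀ Q s t, V Q s t = (∑ a, π t a * Q s a) + αent * H t)
    (T : (S → A → ℝ) → S → A → ℝ)
    (hT : ∀ Q s a, T Q s a = r s a + γ * ∑ s', F s a s' *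
      (-αattk * Real.log (∑ t, p s' t * Real.exp (-(V Q s' t) / αattk))))
    (Q₁ Q₂ : S → A → ℝ) :
    Finset.univ.sup' Finset.univ_nonempty
        (fun sa : S × A => |T Q₁ sa.1 sa.2 - T Q₂ sa.1 sa.2|) ≤
      γ * Finset.univ.sup' Finset.univ_nonempty
        (fun sa : S × A => |Q₁ sa.1 sa.2 - Q₂ sa.1 sa.2|) := by
  have key : ∀ (M : ℝ) (P Q : S → A → ℝ), (∀ s a, P s a ≤ Q s a + M) →
      ∀ s a, T P s a ≤ T Q s a + γ * M := by
    intro M P Q h s a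
    have hVle : ∀ s t, V P s t ≤ V Q s t + M := by
      intro s t
      have h1 : ∑ a, π t a * P s a ≤ ∑ a, π t a * (Q s a + M) :=
        Finset.sum_le_sum fun a _ => mul_le_mul_of_nonneg_left (h s a) (hπ0 t a)
      have h2 : ∑ a, π t a * (Q s a + M) = (∑ a, π t a * Q s a) + M := by
        simp only [mul_add, Finset.sum_add_distrib, ← Finset.sum_mul, hπ1, one_mul]
      rw [hV, hV]
      linarith
    have hpos : ∀ R s, 0 < ∑ t, p s t * Real.exp (-(V R s t) / αattk) := fun R s =>
      Finset.sum_pos (fun t _ => mul_pos (hp0 s t) (Real.exp_pos _)) Finset.univ_nonempty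
    have hg : ∀ s, -αattk * Real.log (∑ t, p s t * Real.exp (-(V P s t) / αattk)) ≤
        -αattk * Real.log (∑ t, p s t * Real.exp (-(V Q s t) / αattk)) + M := by
      intro s
      have hZ : ∑ t, p s t * Real.exp (-(V Q s t) / αattk) ≤
          (∑ t, p s t * Real.exp (-(V P s t) / αattk)) * Real.exp (M / αattk) := by
        rw [Finset.sum_mul]
        refine Finset.sum_le_sum fun t _ => ?_
        rw [mul_assoc, ← Real.exp_add, ← add_div]
        refine mul_le_mul_of_nonneg_left (Real.exp_le_exp.2 ?_) (hp0 s t).le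
        refine div_le_div_of_nonneg_right ?_ hαattk.le
        linarith [hVle s t]
      have hlog := Real.log_le_log (hpos Q s) hZ
      rw [Real.log_mul (hpos P s).ne' (Real.exp_pos _).ne', Real.log_exp] at hlog
      have h3 := mul_le_mul_of_nonneg_left hlog hαattk.le
      rw [mul_add, mul_div_cancel₀ _ hαattk.ne'] at h3
      linarith
    have h4 := Finset.sum_le_sum (s := Finset.univ) fun s' _ =>
      mul_le_mul_of_nonneg_left (hg s') (hF0 s a s')
    simp only [mul_add, Finset.sum_add_distrib, ← Finset.sum_mul, hF1, one_mul] at h4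
    have h5 := mul_le_mul_of_nonneg_left h4 hγ0
    rw [mul_add] at h5
    rw [hT, hT]
    linarith
  set M := Finset.univ.sup' Finset.univ_nonempty
    (fun sa : S × A => |Q₁ sa.1 sa.2 - Q₂ sa.1 sa.2|) with hM
  have hb : ∀ s a, |Q₁ s a - Q₂ s a| ≤ M := fun s a =>
    Finset.le_sup' (fun sa : S × A => |Q₁ sa.1 sa.2 - Q₂ sa.1 sa.2|) (Finset.mem_univ (s, a))
  refine Finset.sup'_le _ _ fun sa _ => abs_le.2 ⟨?_, ?_⟩
  · have := key M Q₂ Q₁ (fun s a => by linarith [(abs_le.1 (hb s a)).1]) sa.1 sa.2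
    linarith
  · have := key M Q₁ Q₂ (fun s a => by linarith [(abs_le.1 (hb s a)).2]) sa.1 sa.2
    linarith
end

section
/- Fix finite nonempty types S (states; the observation space is also S) and A (actions), a transition kernel F : S → A → S → ℝ with F s a s' ≥ 0 and ∑_{s'} F s a s' = 1 for all s, a; a perturbation prior p : S → S → ℝ with p s s̃ ≥ 0 and ∑_{s̃} p s s̃ = 1 for all s; a policy π : S → A → ℝ with π s̃ a ≥ 0 and ∑_a π s̃ a = 1 for all s̃; a reward r : S → A → ℝ; a discount factor γ with 0 ≤ γ < 1; a coefficient α_ent ∈ ℝ; a mixing weight κ with 0 ≤ κ ≤ 1; and a perturbation-set map B : S → Finset S with B s nonempty for every s. Define H(s̃) = −∑_a π s̃ a * Real.log (π s̃ a), and for Q : S → A → ℝ define V_Q(s, s̃) = ∑_a π s̃ a * Q s a + α_ent * H(s̃). Define the epsilon-worst Bellman operator by (T Q)(s, a) = r s a + γ * ∑_{s'} F s a s' * ( κ * (min over s̃ ∈ B s' of V_Q(s', s̃)) + (1 − κ) * ∑_{s̃} p s' s̃ * V_Q(s', s̃) ). Then T is a γ-contraction in sup norm: for all Q₁, Q₂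 : S → A → ℝ, max_{(s,a)} |(T Q₁)(s,a) − (T Q₂)(s,a)| ≤ γ * max_{(s,a)} |Q₁(s,a) − Q₂(s,a)|. -/
theorem avg_le_avg_add {ι : Type*} [Fintype ι] (w f g : ι → ℝ) (M : ℝ)
    (h0 : ∀ i, 0 ≤ w i) (h1 : ∑ i, w i = 1) (h : ∀ i, f i ≤ g i + M) :
    ∑ i, w i * f i ≤ (∑ i, w i * g i) + M := by
  calc ∑ i, w i * f i ≤ ∑ i, w i * (g i + M) :=
        Finset.sum_le_sum fun i _ => mul_le_mul_of_nonneg_left (h i) (h0 i)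
    _ = (∑ i, w i * g i) + M := by
        simp only [mul_add, Finset.sum_add_distrib, ← Finset.sum_mul, h1, one_mul]

/-- Contraction property of the epsilon-worst Bellman operator
(the paper's Theorem 4.9). -/
theorem epsilonWorst_bellman_contraction
    {S A : Type*} [Fintype S] [Nonempty S] [Fintype A] [Nonempty A]
    (F : S → A → S → ℝ) (hF0 : ∀ s a s', 0 ≤ F s a s')
    (hF1 : ∀ s a, ∑ s', F s a s' = 1)
    (p : S → S → ℝ) (hp0 : ∀ s t, 0 ≤ p s t) (hp1 : ∀ s, ∑ t, p s t = 1)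
    (π : S → A → ℝ) (hπ0 : ∀ t a, 0 ≤ π t a) (hπ1 : ∀ t, ∑ a, π t a = 1)
    (r : S → A → ℝ) (γ : ℝ) (hγ0 : 0 ≤ γ) (hγ1 : γ < 1)
    (αent : ℝ) (κ : ℝ) (hκ0 : 0 ≤ κ) (hκ1 : κ ≤ 1)
    (B : S → Finset S) (hB : ∀ s, (B s).Nonempty)
    (H : S → ℝ) (hH : ∀ t, H t = -∑ a, π t a * Real.log (π t a))
    (V : (S → A → ℝ) → S → S → ℝ)
    (hV : ∀ Q s t, V Q s t = (∑ a, π t a * Q s a) + αent * H t)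
    (T : (S → A → ℝ) → S → A → ℝ)
    (hT : ∀ Q s a, T Q s a = r s a + γ * ∑ s', F s a s' *
      (κ * (B s').inf' (hB s') (fun t => V Q s' t) +
        (1 - κ) * ∑ t, p s' t * V Q s' t))
    (Q₁ Q₂ : S → A → ℝ) :
    Finset.univ.sup' Finset.univ_nonempty
        (fun sa : S × A => |T Q₁ sa.1 sa.2 - T Q₂ sa.1 sa.2|) ≤
      γ * Finset.univ.sup' Finset.univ_nonempty
        (fun sa : S × A => |Q₁ sa.1 sa.2 - Q₂ sa.1 sa.2|) := by
  have key : ∀ (M : ℝ) (Q Q' : S → A → ℝ), (∀ s a, Q s a ≤ Q' s a + M) →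
      ∀ s a, T Q s a ≤ T Q' s a + γ * M := by
    intro M Q Q' hQ s a
    have hVV : ∀ s t, V Q s t ≤ V Q' s t + M := by
      intro s t
      rw [hV, hV]
      have := avg_le_avg_add (π t) (Q s) (Q' s) M (hπ0 t) (hπ1 t) (hQ s)
      linarith
    rw [hT, hT, add_assoc, ← mul_add]
    refine add_le_add_right (mul_le_mul_of_nonneg_left ?_ hγ0) _
    refine avg_le_avg_add (F s a) _ _ M (hF0 s a) (hF1 s a) fun s' => ?_
    have h1 : (B s').inf' (hB s') (fun t => V Q s' t) ≤
        (B s').inf' (hB s') (fun t => V Q' s' t) + M := by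
      obtain ⟨t, ht, he⟩ := Finset.exists_mem_eq_inf' (hB s') (fun t => V Q' s' t)
      rw [he]
      exact (Finset.inf'_le _ ht).trans (hVV s' t)
    have h2 := avg_le_avg_add (p s') (V Q s') (V Q' s') M (hp0 s') (hp1 s') (hVV s')
    have h3 := mul_le_mul_of_nonneg_left h1 hκ0
    have h4 := mul_le_mul_of_nonneg_left h2 (sub_nonneg.2 hκ1)
    linarith
  have hM : ∀ s a, |Q₁ s a - Q₂ s a| ≤ Finset.univ.sup' Finset.univ_nonempty
        (fun sa : S × A => |Q₁ sa.1 sa.2 - Q₂ sa.1 sa.2|) := fun s a =>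
    Finset.le_sup' (fun sa : S × A => |Q₁ sa.1 sa.2 - Q₂ sa.1 sa.2|) (Finset.mem_univ (s, a))
  generalize Finset.univ.sup' Finset.univ_nonempty
        (fun sa : S × A => |Q₁ sa.1 sa.2 - Q₂ sa.1 sa.2|) = M at hM ⊢
  refine Finset.sup'_le _ _ fun sa _ => ?_
  have h1 := key M Q₁ Q₂ (fun s a => by linarith [(abs_le.1 (hM s a)).2]) sa.1 sa.2
  have h2 := key M Q₂ Q₁ (fun s a => by linarith [(abs_le.1 (hM s a)).1]) sa.1 sa.2
  exact abs_le.2 ⟨by linarith, by linarith⟩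
end

section
/- Fix finite nonempty types S and A, a transition kernel F : S → A → S → ℝ with F s a s' ≥ 0 and ∑_{s'} F s a s' = 1; a perturbation prior p : S → S → ℝ with p s s̃ > 0 and ∑_{s̃} p s s̃ = 1; a policy π : S → A → ℝ with π s̃ a ≥ 0 and ∑_a π s̃ a = 1; a reward r : S → A → ℝ; γ with 0 ≤ γ < 1; α_attk > 0; α_ent ∈ ℝ; and f : ℝ → ℝ convex with f 1 = 0. Define H(s̃) = −∑_a π s̃ a * Real.log (π s̃ a); for Q : S → A → ℝ, V_Q(s, s̃) = ∑_a π s̃ a * Q s a + α_ent * H(s̃); the soft-worst functional W_s(v) = ⨅ over probability vectors ν on S of ( ∑_{s̃} ν s̃ * v s̃ + α_attk * ∑_{s̃} p s s̃ * f (ν s̃ / p s s̃) ); the agent operator (T_ag Q)(s, a) = r s a + γ * ∑_{s'} F s a s' * W_{s'}(V_Q(s', ·)); the adversary reward c(s, s̃) = ∑_a π s̃ a * (−r s a); the policy-averaged transition G(s, s̃, s') = ∑_a π s̃ a * F s a s'; the soft-best functional M_s(u) = ⨆ over probability vectors ν on S of ( ∑_{s̃} ν s̃ * u s̃ − α_attk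 * ∑_{s̃} p s s̃ * f (ν s̃ / p s s̃) ); and the adversary operator (T_adv Q)(s, s̃) = c(s, s̃) + γ * ∑_{s'} G(s, s̃, s') * M_{s'}( fun s̃' => Q s' s̃' − α_ent * H(s̃') ) for Q : S → S → ℝ. Suppose Q_ag : S → A → ℝ and Q_adv : S → S → ℝ satisfy Q_adv(s, s̃) = ∑_a π s̃ a * (−Q_ag(s, a)) for all s, s̃. Then for all s, s̃: (T_adv Q_adv)(s, s̃) = ∑_a π s̃ a * (−(T_ag Q_ag)(s, a)). -/
/-- Operator-intertwining identity at the core of the paper's Theorem 3.3: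
when the adversary's action-value function is the policy-expectation of the
negated agent action-value function, applying the adversary's soft-optimal
Bellman operator agrees with negating and policy-averaging the agent's
soft-worst Bellman operator. -/
theorem valt_operator_intertwining
    {S A : Type*} [Fintype S] [Nonempty S] [Fintype A] [Nonempty A]
    (F : S → A → S → ℝ) (hF0 : ∀ s a s', 0 ≤ F s a s')
    (hF1 : ∀ s a, ∑ s', F s a s' = 1)
    (p : S → S → ℝ) (hp0 : ∀ s t, 0 < p s t) (hp1 : ∀ s, ∑ t, p s t = 1)
    (π : S → A → ℝ) (hπ0 : ∀ t a, 0 ≤ π t a) (hπ1 : ∀ t, ∑ a, π t a = 1)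
    (r : S → A → ℝ) (γ : ℝ) (hγ0 : 0 ≤ γ) (hγ1 : γ < 1)
    (αattk αent : ℝ) (hαattk : 0 < αattk)
    (f : ℝ → ℝ) (hf : ConvexOn ℝ Set.univ f) (hf1 : f 1 = 0)
    (H : S → ℝ) (hH : ∀ t, H t = -∑ a, π t a * Real.log (π t a))
    (V : (S → A → ℝ) → S → S → ℝ)
    (hV : ∀ Q s t, V Q s t = (∑ a, π t a * Q s a) + αent * H t)
    (W : S → (S → ℝ) → ℝ)
    (hW : ∀ s v, W s v =
      ⨅ ν : {w : S → ℝ // (∀ t, 0 ≤ w t) ∧ ∑ t, w t = 1},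
        ((∑ t, ν.1 t * v t) + αattk * ∑ t, p s t * f (ν.1 t / p s t)))
    (Tag : (S → A → ℝ) → S → A → ℝ)
    (hTag : ∀ Q s a, Tag Q s a =
      r s a + γ * ∑ s', F s a s' * W s' (fun t => V Q s' t))
    (c : S → S → ℝ) (hc : ∀ s t, c s t = ∑ a, π t a * (-r s a))
    (G : S → S → S → ℝ) (hG : ∀ s t s', G s t s' = ∑ a, π t a * F s a s')
    (M : S → (S → ℝ) → ℝ)
    (hM : ∀ s u, M s u =
      ⨆ ν : {w : S → ℝ // (∀ t, 0 ≤ w t) ∧ ∑ t, w t = 1},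
        ((∑ t, ν.1 t * u t) - αattk * ∑ t, p s t * f (ν.1 t / p s t)))
    (Tadv : (S → S → ℝ) → S → S → ℝ)
    (hTadv : ∀ Q s t, Tadv Q s t = c s t + γ * ∑ s', G s t s' *
      M s' (fun t' => Q s' t' - αent * H t'))
    (Qag : S → A → ℝ) (Qadv : S → S → ℝ)
    (hlink : ∀ s t, Qadv s t = ∑ a, π t a * (-Qag s a)) :
    ∀ s t, Tadv Qadv s t = ∑ a, π t a * (-(Tag Qag s a)) := by
  have hMW : ∀ s', M s' (fun t' => Qadv s' t' - αent * H t') =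
      -W s' (fun t => V Qag s' t) := by
    intro s'
    rw [hM, hW, iInf, Real.sInf_def, neg_neg, iSup]
    congr 1
    ext x
    simp only [Set.mem_range, Set.mem_neg]
    refine exists_congr fun ν => ?_
    have h : (∑ t, ν.1 t * (Qadv s' t - αent * H t)) = -∑ t, ν.1 t * V Qag s' t := by
      rw [← Finset.sum_neg_distrib]
      refine Finset.sum_congr rfl fun t _ => ?_
      rw [hlink, hV]
      simp only [mul_neg, Finset.sum_neg_distrib]
      ring
    rw [h]
    constructor <;> intro h' <;> linarith
  intro s t
  rw [hTadv, hc]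
  simp only [hMW, hG, hTag, neg_add, mul_add, Finset.sum_add_distrib]
  congr 1
  simp only [mul_neg, Finset.sum_neg_distrib, Finset.mul_sum, Finset.sum_mul]
  rw [Finset.sum_comm]
  congr 1
  refine Finset.sum_congr rfl fun a _ => Finset.sum_congr rfl fun s' _ => ?_
  ring
end

section
/- In the setting of the preceding data (finite nonempty types S, A; kernel F; positive prior p; policy π; reward r; 0 ≤ γ < 1; α_attk > 0; α_ent ∈ ℝ; f : ℝ → ℝ convex with f 1 = 0; H(s̃) = −∑_a π s̃ a * Real.log (π s̃ a); V_Q(s, s̃) = ∑_a π s̃ a * Q s a + α_ent * H(s̃); W_s(v) = ⨅ over probability vectors ν of ( ∑_{s̃} ν s̃ * v s̃ + α_attk * ∑_{s̃} p s s̃ * f (ν s̃ / p s s̃) ); M_s(u) = ⨆ over probability vectors ν of ( ∑_{s̃} ν s̃ * u s̃ − α_attk * ∑_{s̃} p s s̃ * f (ν s̃ / p s s̃) ); (T_ag Q)(s,a) = r s a + γ * ∑_{s'} F s a s' * W_{s'}(V_Q(s',·)); c(s,s̃) = ∑_a π s̃ a * (−r s a); G(s,s̃,s') = ∑_a π s̃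 a * F s a s'; (T_adv Q)(s,s̃) = c(s,s̃) + γ * ∑_{s'} G(s,s̃,s') * M_{s'}(fun s̃' => Q s' s̃' − α_ent * H(s̃'))), suppose Q* : S → A → ℝ is a fixed point of the agent operator, T_ag Q* = Q*. Define Q° : S → S → ℝ by Q°(s, s̃) = ∑_a π s̃ a * (−Q*(s, a)). Then Q° is a fixed point of the adversary operator, T_adv Q° = Q°, and for every state s the optimal values have opposite signs: M_s( fun s̃ => Q°(s, s̃) − α_ent * H(s̃) ) = − W_s( fun s̃ => V_{Q*}(s, s̃) ). -/
/-- Fixed-point conclusion of the paper's Theorem 3.3: the agent's soft-worst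
Bellman operator and the adversary's soft-optimal Bellman operator share fixed
points with opposite signs. -/
theorem valt_shared_fixed_points_opposite_signs
    {S A : Type*} [Fintype S] [Nonempty S] [Fintype A] [Nonempty A]
    (F : S → A → S → ℝ) (hF0 : ∀ s a s', 0 ≤ F s a s')
    (hF1 : ∀ s a, ∑ s', F s a s' = 1)
    (p : S → S → ℝ) (hp0 : ∀ s t, 0 < p s t) (hp1 : ∀ s, ∑ t, p s t = 1)
    (π : S → A → ℝ) (hπ0 : ∀ t a, 0 ≤ π t a) (hπ1 : ∀ t, ∑ a, π t a = 1)
    (r : S → A → ℝ) (γ : ℝ) (hγ0 : 0 ≤ γ) (hγ1 : γ < 1)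
    (αattk αent : ℝ) (hαattk : 0 < αattk)
    (f : ℝ → ℝ) (hf : ConvexOn ℝ Set.univ f) (hf1 : f 1 = 0)
    (H : S → ℝ) (hH : ∀ t, H t = -∑ a, π t a * Real.log (π t a))
    (V : (S → A → ℝ) → S → S → ℝ)
    (hV : ∀ Q s t, V Q s t = (∑ a, π t a * Q s a) + αent * H t)
    (W : S → (S → ℝ) → ℝ)
    (hW : ∀ s v, W s v =
      ⨅ ν : {w : S → ℝ // (∀ t, 0 ≤ w t) ∧ ∑ t, w t = 1},
        ((∑ t, ν.1 t * v t) + αattk * ∑ t, p s t * f (ν.1 t / p s t)))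
    (M : S → (S → ℝ) → ℝ)
    (hM : ∀ s u, M s u =
      ⨆ ν : {w : S → ℝ // (∀ t, 0 ≤ w t) ∧ ∑ t, w t = 1},
        ((∑ t, ν.1 t * u t) - αattk * ∑ t, p s t * f (ν.1 t / p s t)))
    (Tag : (S → A → ℝ) → S → A → ℝ)
    (hTag : ∀ Q s a, Tag Q s a =
      r s a + γ * ∑ s', F s a s' * W s' (fun t => V Q s' t))
    (c : S → S → ℝ) (hc : ∀ s t, c s t = ∑ a, π t a * (-r s a))
    (G : S → S → S → ℝ) (hG : ∀ s t s', G s t s' = ∑ a, π t a * F s a s')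
    (Tadv : (S → S → ℝ) → S → S → ℝ)
    (hTadv : ∀ Q s t, Tadv Q s t = c s t + γ * ∑ s', G s t s' *
      M s' (fun t' => Q s' t' - αent * H t'))
    (Qstar : S → A → ℝ) (hQstar : Tag Qstar = Qstar)
    (Qcirc : S → S → ℝ)
    (hQcirc : ∀ s t, Qcirc s t = ∑ a, π t a * (-Qstar s a)) :
    Tadv Qcirc = Qcirc ∧
      ∀ s, M s (fun t => Qcirc s t - αent * H t) =
        -W s (fun t => V Qstar s t) := by
  have key : ∀ s, M s (fun t => Qcirc s t - αent * H t) =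
      -W s (fun t => V Qstar s t) := by
    intro s
    rw [hM, hW, iInf, Real.sInf_def, neg_neg, iSup]
    congr 1
    rw [← Set.image_neg_eq_neg, ← Set.range_comp]
    congr 1
    funext ν
    have h : ∀ t, ν.1 t * (Qcirc s t - αent * H t) = -(ν.1 t * V Qstar s t) := by
      intro t
      rw [hQcirc, hV]
      simp only [mul_neg, Finset.sum_neg_distrib]
      ring
    simp only [Function.comp, h, Finset.sum_neg_distrib]
    ring
  refine ⟨?_, key⟩
  funext s t
  rw [hTadv, hc, hQcirc]
  simp only [key, hG]
  have h : ∀ a, π t a * (-Qstar s a) = π t a * (-r s a)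
      + γ * ∑ s', π t a * F s a s' * -W s' (fun t => V Qstar s' t) := by
    intro a
    have h1 : Qstar s a = r s a + γ * ∑ s', F s a s' * W s' (fun t => V Qstar s' t) := by
      rw [← hTag, hQstar]
    rw [h1]
    simp only [mul_neg, Finset.sum_neg_distrib, mul_assoc, ← Finset.mul_sum]
    ring
  rw [Finset.sum_congr rfl (fun a _ => h a), Finset.sum_add_distrib, ← Finset.mul_sum,
    Finset.sum_comm]
  simp only [Finset.sum_mul]
end

section
/- Fix finite nonempty types S and A, a transition kernel F : S → A → S → ℝ with F s a s' ≥ 0 and ∑_{s'} F s a s' = 1; a perturbation prior p : S → S → ℝ with p s s̃ > 0 and ∑_{s̃} p s s̃ = 1; a policy π : S → A → ℝ with π s̃ a ≥ 0 and ∑_a π s̃ a = 1; a reward r : S → A → ℝ; γ with 0 ≤ γ < 1; α_attk > 0; α_ent ∈ ℝ; and f : ℝ → ℝ convex with f 1 = 0. Define H(s̃) = −∑_a π s̃ a * Real.log (π s̃ a); for Q : S → A → ℝ, V_Q(s, s̃) = ∑_a π s̃ a * Q s a + α_ent * H(s̃); the soft-worst functional W_s(v) = ⨅ over probability vectors ν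 on S of ( ∑_{s̃} ν s̃ * v s̃ + α_attk * ∑_{s̃} p s s̃ * f (ν s̃ / p s s̃) ); and the agent operator (T_ag Q)(s, a) = r s a + γ * ∑_{s'} F s a s' * W_{s'}(V_Q(s', ·)). Then T_ag is a γ-contraction in sup norm: for all Q₁, Q₂ : S → A → ℝ, max_{(s,a)} |(T_ag Q₁)(s,a) − (T_ag Q₂)(s,a)| ≤ γ * max_{(s,a)} |Q₁(s,a) − Q₂(s,a)|. -/
/-- Agent-side soft worst-case policy evaluation contraction: the agent's
soft-worst Bellman operator with a general f-divergence soft constraint is a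
γ-contraction in sup norm. -/
theorem valt_agent_bellman_contraction
    {S A : Type*} [Fintype S] [Nonempty S] [Fintype A] [Nonempty A]
    (F : S → A → S → ℝ) (hF0 : ∀ s a s', 0 ≤ F s a s')
    (hF1 : ∀ s a, ∑ s', F s a s' = 1)
    (p : S → S → ℝ) (hp0 : ∀ s t, 0 < p s t) (hp1 : ∀ s, ∑ t, p s t = 1)
    (π : S → A → ℝ) (hπ0 : ∀ t a, 0 ≤ π t a) (hπ1 : ∀ t, ∑ a, π t a = 1)
    (r : S → A → ℝ) (γ : ℝ) (hγ0 : 0 ≤ γ) (hγ1 : γ < 1)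
    (αattk αent : ℝ) (hαattk : 0 < αattk)
    (f : ℝ → ℝ) (hf : ConvexOn ℝ Set.univ f) (hf1 : f 1 = 0)
    (H : S → ℝ) (hH : ∀ t, H t = -∑ a, π t a * Real.log (π t a))
    (V : (S → A → ℝ) → S → S → ℝ)
    (hV : ∀ Q s t, V Q s t = (∑ a, π t a * Q s a) + αent * H t)
    (W : S → (S → ℝ) → ℝ)
    (hW : ∀ s v, W s v =
      ⨅ ν : {w : S → ℝ // (∀ t, 0 ≤ w t) ∧ ∑ t, w t = 1},
        ((∑ t, ν.1 t * v t) + αattk * ∑ t, p s t * f (ν.1 t / p s t)))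
    (Tag : (S → A → ℝ) → S → A → ℝ)
    (hTag : ∀ Q s a, Tag Q s a =
      r s a + γ * ∑ s', F s a s' * W s' (fun t => V Q s' t))
    (Q₁ Q₂ : S → A → ℝ) :
    Finset.univ.sup' Finset.univ_nonempty
        (fun sa : S × A => |Tag Q₁ sa.1 sa.2 - Tag Q₂ sa.1 sa.2|) ≤
      γ * Finset.univ.sup' Finset.univ_nonempty
        (fun sa : S × A => |Q₁ sa.1 sa.2 - Q₂ sa.1 sa.2|) := by
  have hbdd : ∀ (s : S) (v : S → ℝ), BddBelow (Set.range
      (fun ν : {w : S → ℝ // (∀ t, 0 ≤ w t) ∧ ∑ t, w t = 1} =>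
        ((∑ t, ν.1 t * v t) + αattk * ∑ t, p s t * f (ν.1 t / p s t)))) := by
    intro s v
    refine ⟨-∑ t, |v t|, ?_⟩
    rintro _ ⟨⟨w, hw0, hw1⟩, rfl⟩
    have hJ : 0 ≤ ∑ t, p s t * f (w t / p s t) := by
      have h := hf.map_sum_le (t := Finset.univ) (w := p s) (p := fun t => w t / p s t)
        (fun t _ => (hp0 s t).le) (hp1 s) (fun t _ => Set.mem_univ _)
      have h2 : ∑ t, p s t • (w t / p s t) = 1 := by
        rw [← hw1]
        refine Finset.sum_congr rfl fun t _ => ?_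
        rw [smul_eq_mul, mul_div_cancel₀ _ (hp0 s t).ne']
      rw [h2, hf1] at h
      simpa only [smul_eq_mul] using h
    have hv : -∑ t, |v t| ≤ ∑ t, w t * v t := by
      rw [← Finset.sum_neg_distrib]
      refine Finset.sum_le_sum fun t _ => ?_
      have hle : w t ≤ 1 := by
        rw [← hw1]
        exact Finset.single_le_sum (fun i _ => hw0 i) (Finset.mem_univ t)
      nlinarith [neg_abs_le (v t), abs_nonneg (v t), hw0 t,
        mul_nonneg (hw0 t) (by linarith [neg_abs_le (v t)] : 0 ≤ v t + |v t|),
        mul_nonneg (sub_nonneg.2 hle) (abs_nonneg (v t))]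
    have := mul_nonneg hαattk.le hJ
    show -∑ t, |v t| ≤ (∑ t, w t * v t) + αattk * ∑ t, p s t * f (w t / p s t)
    linarith
  have hWle : ∀ (s : S) (v₁ v₂ : S → ℝ) (M : ℝ), (∀ t, v₁ t ≤ v₂ t + M) →
      W s v₁ ≤ W s v₂ + M := by
    intro s v₁ v₂ M h
    haveI : Nonempty {w : S → ℝ // (∀ t, 0 ≤ w t) ∧ ∑ t, w t = 1} :=
      ⟨⟨p s, fun t => (hp0 s t).le, hp1 s⟩⟩
    rw [← sub_le_iff_le_add, hW s v₂]
    refine le_ciInf fun ν => ?_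
    rw [sub_le_iff_le_add, hW s v₁]
    refine (ciInf_le (hbdd s v₁) ν).trans ?_
    have : ∑ t, ν.1 t * v₁ t ≤ (∑ t, ν.1 t * v₂ t) + M := by
      calc ∑ t, ν.1 t * v₁ t ≤ ∑ t, ν.1 t * (v₂ t + M) :=
            Finset.sum_le_sum fun t _ => mul_le_mul_of_nonneg_left (h t) (ν.2.1 t)
        _ = _ := by
            simp only [mul_add, Finset.sum_add_distrib]
            rw [← Finset.sum_mul, ν.2.2, one_mul]
    linarith
  have hVle : ∀ (P Q : S → A → ℝ) (M : ℝ), (∀ s a, P s a ≤ Q s a + M) →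
      ∀ s t, V P s t ≤ V Q s t + M := by
    intro P Q M h s t
    rw [hV, hV]
    have : ∑ a, π t a * P s a ≤ (∑ a, π t a * Q s a) + M := by
      calc ∑ a, π t a * P s a ≤ ∑ a, π t a * (Q s a + M) :=
            Finset.sum_le_sum fun a _ => mul_le_mul_of_nonneg_left (h s a) (hπ0 t a)
        _ = _ := by
            simp only [mul_add, Finset.sum_add_distrib]
            rw [← Finset.sum_mul, hπ1, one_mul]
    linarith
  have hTle : ∀ (P Q : S → A → ℝ) (M : ℝ), (∀ s a, P s a ≤ Q s a + M) →
      ∀ s a, Tag P s a ≤ Tag Q s a + γ * M := by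
    intro P Q M h s a
    rw [hTag, hTag]
    have : ∑ s', F s a s' * W s' (fun t => V P s' t) ≤
        (∑ s', F s a s' * W s' (fun t => V Q s' t)) + M := by
      calc ∑ s', F s a s' * W s' (fun t => V P s' t)
          ≤ ∑ s', F s a s' * (W s' (fun t => V Q s' t) + M) :=
            Finset.sum_le_sum fun s' _ => mul_le_mul_of_nonneg_left
              (hWle s' _ _ M (hVle P Q M h s')) (hF0 s a s')
        _ = _ := by
            simp only [mul_add, Finset.sum_add_distrib]
            rw [← Finset.sum_mul, hF1, one_mul]
    have := mul_le_mul_of_nonneg_left this hγ0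
    linarith
  set M := Finset.univ.sup' Finset.univ_nonempty
        (fun sa : S × A => |Q₁ sa.1 sa.2 - Q₂ sa.1 sa.2|) with hM
  have hMle : ∀ s a, |Q₁ s a - Q₂ s a| ≤ M := fun s a =>
    Finset.le_sup' (fun sa : S × A => |Q₁ sa.1 sa.2 - Q₂ sa.1 sa.2|) (Finset.mem_univ (s, a))
  refine Finset.sup'_le _ _ fun sa _ => ?_
  rw [abs_le]
  have h1 := hTle Q₁ Q₂ M (fun s a => by linarith [(abs_le.1 (hMle s a)).2]) sa.1 sa.2
  have h2 := hTle Q₂ Q₁ M (fun s a => by linarith [(abs_le.1 (hMle s a)).1]) sa.1 sa.2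
  constructor <;> linarith
end

section
/- Fix finite nonempty types S and A, a transition kernel F : S → A → S → ℝ with F s a s' ≥ 0 and ∑_{s'} F s a s' = 1; a fixed adversary kernel ν : S → S → ℝ with ν s s̃ ≥ 0 and ∑_{s̃} ν s s̃ = 1; a reward r : S → A → ℝ; γ with 0 ≤ γ < 1; and α_ent ≥ 0. For a policy ρ : S → A → ℝ with ρ s̃ a ≥ 0 and ∑_a ρ s̃ a = 1, write H_ρ(s̃) = −∑_a ρ s̃ a * Real.log (ρ s̃ a) and define the fixed-adversary Bellman operator (T_ρ Q)(s, a) = r s a + γ * ∑_{s'} F s a s' * ∑_{s̃} ν s' s̃ * ( ∑_{a'} ρ s̃ a' * Q s' a' + α_ent * H_ρ(s̃) ). Let π and π̂ be two such policies, and suppose Q₁ : S → A → ℝ satisfies T_π Q₁ = Q₁, Q₂ : S → A → ℝ satisfies T_{π̂} Q₂ = Q₂, and the improvement condition holds: for every s, ∑_{s̃} ν s s̃ * ( α_ent * H_{π̂}(s̃) + ∑_a π̂ s̃ a * Q₁ s a ) ≥ ∑_{s̃} ν s s̃ * ( α_ent * H_π(s̃) + ∑_a π s̃ a * Q₁ s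 a ). Then Q₂ s a ≥ Q₁ s a for all s and a. -/
/-- The paper's Theorem 4.7 (Policy Improvement Theorem with a Fixed
Adversary): if the new policy π̂ does not decrease the entropy-regularized
one-step value of the old policy's action-value function under the fixed
adversary ν, then the fixed-point action-value function of π̂ dominates that of
π pointwise. -/
theorem policy_improvement_with_fixed_adversary
    {S A : Type*} [Fintype S] [Nonempty S] [Fintype A] [Nonempty A]
    (F : S → A → S → ℝ) (hF0 : ∀ s a s', 0 ≤ F s a s')
    (hF1 : ∀ s a, ∑ s', F s a s' = 1)
    (ν : S → S → ℝ) (hν0 : ∀ s t, 0 ≤ ν s t) (hν1 : ∀ s, ∑ t, ν s t = 1)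
    (r : S → A → ℝ) (γ : ℝ) (hγ0 : 0 ≤ γ) (hγ1 : γ < 1)
    (αent : ℝ) (hαent : 0 ≤ αent)
    (T : (S → A → ℝ) → (S → A → ℝ) → S → A → ℝ)
    (hT : ∀ ρ Q s a, T ρ Q s a = r s a + γ * ∑ s', F s a s' * ∑ t, ν s' t *
      ((∑ a', ρ t a' * Q s' a') +
        αent * (-∑ a', ρ t a' * Real.log (ρ t a'))))
    (π : S → A → ℝ) (hπ0 : ∀ t a, 0 ≤ π t a) (hπ1 : ∀ t, ∑ a, π t a = 1)
    (πh : S → A → ℝ) (hπh0 : ∀ t a, 0 ≤ πh t a) (hπh1 : ∀ t, ∑ a, πh t a = 1)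
    (Q₁ : S → A → ℝ) (hQ₁ : T π Q₁ = Q₁)
    (Q₂ : S → A → ℝ) (hQ₂ : T πh Q₂ = Q₂)
    (himpr : ∀ s,
      ∑ t, ν s t * (αent * (-∑ a, πh t a * Real.log (πh t a)) +
        ∑ a, πh t a * Q₁ s a) ≥
      ∑ t, ν s t * (αent * (-∑ a, π t a * Real.log (π t a)) +
        ∑ a, π t a * Q₁ s a)) :
    ∀ s a, Q₁ s a ≤ Q₂ s a := by
  obtain ⟨⟨s0, a0⟩, hmax⟩ := Finite.exists_max (fun p : S × A => Q₁ p.1 p.2 - Q₂ p.1 p.2)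
  obtain ⟨M, hM⟩ : ∃ M, M = Q₁ s0 a0 - Q₂ s0 a0 := ⟨_, rfl⟩
  have hle : ∀ s a, Q₁ s a ≤ Q₂ s a + M := by
    intro s a
    have h := hmax (s, a)
    simp only at h
    linarith
  have hstep : ∀ s', ∑ t, ν s' t * ((∑ a', π t a' * Q₁ s' a') +
        αent * (-∑ a', π t a' * Real.log (π t a'))) ≤
      (∑ t, ν s' t * ((∑ a', πh t a' * Q₂ s' a') +
        αent * (-∑ a', πh t a' * Real.log (πh t a')))) + M := by
    intro s'
    have h1 := himpr s'
    have h2 : ∑ t, ν s' t * (αent * (-∑ a, πh t a * Real.log (πh t a)) +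
        ∑ a, πh t a * Q₁ s' a) ≤
        ∑ t, (ν s' t * ((∑ a', πh t a' * Q₂ s' a') +
        αent * (-∑ a', πh t a' * Real.log (πh t a'))) + ν s' t * M) := by
      refine Finset.sum_le_sum fun t _ => ?_
      rw [← mul_add]
      refine mul_le_mul_of_nonneg_left ?_ (hν0 s' t)
      have h3 : ∑ a, πh t a * Q₁ s' a ≤ ∑ a, (πh t a * Q₂ s' a + πh t a * M) := by
        refine Finset.sum_le_sum fun a _ => ?_
        rw [← mul_add]
        exact mul_le_mul_of_nonneg_left (hle s' a) (hπh0 t a)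
      rw [Finset.sum_add_distrib, ← Finset.sum_mul, hπh1, one_mul] at h3
      linarith
    rw [Finset.sum_add_distrib, ← Finset.sum_mul, hν1, one_mul] at h2
    simp only [add_comm (αent * _)] at h1 h2
    linarith
  have hMle : M ≤ γ * M := by
    have e1 := hT π Q₁ s0 a0
    have e2 := hT πh Q₂ s0 a0
    rw [hQ₁] at e1
    rw [hQ₂] at e2
    have h4 := Finset.sum_le_sum fun s' (_ : s' ∈ Finset.univ) =>
      mul_le_mul_of_nonneg_left (hstep s') (hF0 s0 a0 s')
    simp only [mul_add (F s0 a0 _) _ M] at h4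
    rw [Finset.sum_add_distrib, ← Finset.sum_mul, hF1, one_mul] at h4
    have h5 := mul_le_mul_of_nonneg_left h4 hγ0
    rw [mul_add] at h5
    linarith
  have hM0 : M ≤ 0 := by nlinarith
  intro s a
  linarith [hle s a]
end

section
/- Let α : ℝ with α ≠ 0 and α ≠ 1, and for x > 0 define the α-divergence generator f_α(x) = ((x^α − 1) − α*(x − 1)) / (α*(α − 1)), where x^α denotes Real.rpow. Let y : ℝ satisfy (1 − α)*y < 1, and set x* = (1 + (α − 1)*y)^(1/(α − 1)) and c = (1/α)*(1 + (α − 1)*y)^(α/(α − 1)) − 1/α. Then c is the greatest element of the set { y*x − f_α(x) | x ∈ ℝ, 0 < x }; in particular x* > 0, y*x* − f_α(x*) = c, and y*x − f_α(x) ≤ c for all x > 0. -/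
theorem alphaGen_nonneg (α : ℝ) (t : ℝ) (ht : 0 < t) :
    0 ≤ (t ^ α - 1 - α * (t - 1)) / (α * (α - 1)) := by
  rcases lt_or_ge α 0 with h | h
  · have h1 := one_add_mul_self_le_rpow_one_add (s := t⁻¹ - 1)
      (by have := inv_pos.mpr ht; linarith) (p := 1 - α) (by linarith)
    have e : (1 + (t⁻¹ - 1)) ^ (1 - α) = t ^ α / t := by
      rw [add_sub_cancel, Real.inv_rpow ht.le, ← Real.rpow_neg ht.le, neg_sub,
        Real.rpow_sub_one ht.ne']
    rw [e, le_div_iff₀ ht] at h1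
    have e2 : (1 + (1 - α) * (t⁻¹ - 1)) * t = 1 + α * (t - 1) := by
      field_simp
      ring
    apply div_nonneg
    · linarith
    · nlinarith
  · rcases le_or_gt α 1 with h' | h'
    · have h1 := rpow_one_add_le_one_add_mul_self (s := t - 1) (by linarith) h h'
      rw [add_sub_cancel] at h1
      apply div_nonneg_of_nonpos
      · linarith
      · nlinarith
    · have h1 := one_add_mul_self_le_rpow_one_add (s := t - 1) (by linarith) h'.le
      rw [add_sub_cancel] at h1
      apply div_nonneg
      · linarith
      · nlinarith

/-- Legendre–Fenchel conjugate of the α-divergence generator: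
for `(1 − α) y < 1`, the supremum of `y x − f_α x` over `x > 0` equals
`(1/α)(1 + (α − 1) y)^{α/(α−1)} − 1/α`, attained at
`x* = (1 + (α − 1) y)^{1/(α−1)}`. -/
theorem alphaDivergence_conjugate
    (α : ℝ) (hα0 : α ≠ 0) (hα1 : α ≠ 1)
    (f : ℝ → ℝ)
    (hf : ∀ x : ℝ, 0 < x → f x = ((x ^ α - 1) - α * (x - 1)) / (α * (α - 1)))
    (y : ℝ) (hy : (1 - α) * y < 1)
    (xstar : ℝ) (hxstar : xstar = (1 + (α - 1) * y) ^ (1 / (α - 1)))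
    (c : ℝ) (hc : c = (1 / α) * (1 + (α - 1) * y) ^ (α / (α - 1)) - 1 / α) :
    IsGreatest {z : ℝ | ∃ x : ℝ, 0 < x ∧ z = y * x - f x} c ∧
      0 < xstar ∧ y * xstar - f xstar = c ∧
      ∀ x : ℝ, 0 < x → y * x - f x ≤ c := by
  have hα1' : α - 1 ≠ 0 := sub_ne_zero.mpr hα1
  have hB : 0 < 1 + (α - 1) * y := by linarith
  have hs : 0 < xstar := by rw [hxstar]; exact Real.rpow_pos_of_pos hB _
  have hsα : xstar ^ α = (1 + (α - 1) * y) ^ (α / (α - 1)) := by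
    rw [hxstar, ← Real.rpow_mul hB.le]
    congr 1
    ring
  have hsB : xstar ^ α = (1 + (α - 1) * y) * xstar := by
    have h1 : xstar ^ (α - 1) = 1 + (α - 1) * y := by
      rw [hxstar, ← Real.rpow_mul hB.le, one_div_mul_cancel hα1', Real.rpow_one]
    rw [Real.rpow_sub_one hs.ne', div_eq_iff hs.ne'] at h1
    exact h1
  rw [← hsα] at hc
  have heq : y * xstar - f xstar = c := by
    rw [hf _ hs, hc, hsB]
    field_simp
    ring
  have hle : ∀ x : ℝ, 0 < x → y * x - f x ≤ c := by
    intro x hx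
    have h := mul_nonneg (mul_pos hB hs).le (alphaGen_nonneg α (x / xstar) (div_pos hx hs))
    have e : (1 + (α - 1) * y) * xstar * (((x / xstar) ^ α - 1 - α * (x / xstar - 1)) /
        (α * (α - 1))) = c - (y * x - f x) := by
      rw [Real.div_rpow hx.le hs.le, hf x hx, hc, hsB]
      have hB' := hB.ne'
      have hs' := hs.ne'
      generalize x ^ α = w
      obtain ⟨b, hb⟩ : ∃ b, b = 1 + (α - 1) * y := ⟨_, rfl⟩
      have hy' : y = (b - 1) / (α - 1) := by
        rw [hb]
        field_simp
        ring
      rw [← hb] at hB' ⊢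
      rw [hy']
      field_simp
      ring
    linarith
  refine ⟨⟨⟨xstar, hs, heq.symm⟩, ?_⟩, hs, heq, hle⟩
  rintro z ⟨x, hx, rfl⟩
  exact hle x hx
end
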